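/- Every N-valid propositional formula is CL-valid, i.e., every formula for which Proponent has a winning strategy in the dialogue game with rules D10 and D13 also has a Proponent winning strategy in the dialogue game with rules D10, D13, and E. -/

import Mathlib

/-! ## Dialogical logic: formulas, statements, moves -/

/-- Propositional formulas, built from atoms (indexed by `ℕ`) and `¬`, `∧`, `∨`, `→`. -/
inductive Formula : Type
  | atom : ℕ → Formula
  | neg : Formula → Formula
  | conj : Formula → Formula → Formula
  | disj : Formula → Formula → Formula
  | impl : Formula → Formula → Formula
  deriving DecidableEq, Inhabited

/-- Statements: formulas together with the three symbolic attacks `∧_L`, `∧_R` and `?`. -/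
inductive Statement : Type
  | form : Formula → Statement
  | conjL : Statement  -- the symbolic attack ∧_L
  | conjR : Statement  -- the symbolic attack ∧_R
  | question : Statement   -- the symbolic attack ?
  deriving DecidableEq, Inhabited

/-- A formula is atomic iff it is an atom. -/
def Formula.isAtomic : Formula → Prop
  | .atom _ => True
  | _ => False

/-- A move of a dialogue: a statement together with a reference.  The reference is
`none` for the initial move, `some (m, true)` for an attack on the assertion made at
move `m`, and `some (m, false)` for a defense against the attack made at move `m`. -/
structure Move : Type where
  stmt : Statement
  ref : Option (ℕ × Bool)
  deriving DecidableEq, Inhabited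

/-! ## Particle rules -/

/-- Particle rules, attacks: `Attacks a φ` holds when the statement `a` is an
admissible attack against the assertion `φ`. -/
inductive Attacks : Statement → Formula → Prop
  | conjL (φ ψ : Formula) : Attacks .conjL (.conj φ ψ)
  | conjR (φ ψ : Formula) : Attacks .conjR (.conj φ ψ)
  | disj (φ ψ : Formula) : Attacks .question (.disj φ ψ)
  | impl (φ ψ : Formula) : Attacks (.form φ) (.impl φ ψ)
  | neg (φ : Formula) : Attacks (.form φ) (.neg φ)

/-- Particle rules, defenses: `Defends s a φ` holds when the statement `s` is an
admissible defense of the assertion `φ` against the attack `a`.  (A negation admits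
no defense.) -/
inductive Defends : Statement → Statement → Formula → Prop
  | conjL (φ ψ : Formula) : Defends (.form φ) .conjL (.conj φ ψ)
  | conjR (φ ψ : Formula) : Defends (.form ψ) .conjR (.conj φ ψ)
  | disjL (φ ψ : Formula) : Defends (.form φ) .question (.disj φ ψ)
  | disjR (φ ψ : Formula) : Defends (.form ψ) .question (.disj φ ψ)
  | impl (φ ψ : Formula) : Defends (.form ψ) (.form φ) (.impl φ ψ)

/-! ## Dialogues

A (finite stage of a) dialogue is modelled as a list of moves; the move at index `i`
is the `i`-th move, made by Proponent P if `i` is even and by Opponent O if `i` is odd. -/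

/-- The skeletal dialogue conditions: move 0 is an assertion of a formula with no
reference, and every later move is an attack on, or a defense against, a specified
earlier move of the other player, in accordance with the particle rules; only
non-atomic assertions may be attacked. -/
def IsDialogue (d : List Move) : Prop :=
  (∀ _ : 0 < d.length, d[0]!.ref = none ∧ ∃ φ : Formula, d[0]!.stmt = .form φ) ∧
  (∀ i : ℕ, 0 < i → i < d.length →
    ∃ (m : ℕ) (z : Bool), d[i]!.ref = some (m, z) ∧ m < i ∧ m % 2 ≠ i % 2 ∧
      (z = true →
        ∃ φ : Formula, d[m]!.stmt = .form φ ∧ ¬ φ.isAtomic ∧ Attacks d[i]!.stmt φ) ∧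
      (z = false →
        ∃ (k : ℕ) (φ : Formula), d[m]!.ref = some (k, true) ∧ k < m ∧
          d[k]!.stmt = .form φ ∧ Defends d[i]!.stmt d[m]!.stmt φ))

/-- Rule D10: P may assert an atomic formula only if O has asserted it earlier. -/
def RuleD10 (d : List Move) : Prop :=
  ∀ i < d.length, i % 2 = 0 → ∀ a : ℕ, d[i]!.stmt = .form (.atom a) →
    ∃ j < i, j % 2 = 1 ∧ d[j]!.stmt = .form (.atom a)

/-- Rule D13: each P-assertion may be attacked at most once. -/
def RuleD13 (d : List Move) : Prop :=
  ∀ m : ℕ, m % 2 = 0 → ∀ i < d.length, ∀ j < d.length,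
    d[i]!.ref = some (m, true) → d[j]!.ref = some (m, true) → i = j

/-- Rule E: O may only react (attack or defend) against the immediately preceding
P-move. -/
def RuleE (d : List Move) : Prop :=
  ∀ i < d.length, i % 2 = 1 → ∃ z : Bool, d[i]!.ref = some (i - 1, z)

/-- The rule set N = {D10, D13}. -/
def NRules (d : List Move) : Prop := RuleD10 d ∧ RuleD13 d

/-- The rule set CL = {D10, D13, E}. -/
def CLRules (d : List Move) : Prop := RuleD10 d ∧ RuleD13 d ∧ RuleE d

/-- A dialogue commences with `φ` when its initial move is P's assertion of `φ`. -/
def CommencesWith (φ : Formula) (d : List Move) : Prop :=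
  0 < d.length ∧ d[0]!.stmt = .form φ

/-- An `S`-dialogue for `φ` (for a rule set `S`): a dialogue commencing with `φ`
that obeys the structural rules `S`.  These are exactly the branches (identified
with their underlying move sequences) of the `S`-dialogue tree for `φ`. -/
def SDialogueFor (S : List Move → Prop) (φ : Formula) (d : List Move) : Prop :=
  IsDialogue d ∧ S d ∧ CommencesWith φ d

/-- P wins a finite `S`-dialogue for `φ`: it ends with a P-move (the last index,
`d.length - 1`, is even, i.e. `d.length` is odd) and it cannot be extended by any
legal further (O-)move. -/
def WinsFor (S : List Move → Prop) (φ : Formula) (d : List Move) : Prop :=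
  SDialogueFor S φ d ∧ d.length % 2 = 1 ∧ ∀ m : Move, ¬ SDialogueFor S φ (d ++ [m])

/-- An `S`-winning strategy for P for `φ`, modelled as a set `T` of `S`-dialogues for
`φ`: the nodes of a rooted subtree of the `S`-dialogue tree for `φ`, each node being
identified with the dialogue leading from the root to it.  The conditions state that
`T` is a nonempty, prefix-closed set of `S`-dialogues for `φ` (hence a rooted subtree
of the `S`-dialogue tree with the same root), that every branch of `T` is a finite
`S`-dialogue won by P (leaves are wins for P, and there is no infinite branch), that
every node at odd depth (an O-move) has exactly one child, and that every node at
even depth (a P-move) has the same children in `T` as in the full dialogue tree. -/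
structure IsWinningStrategy (S : List Move → Prop) (φ : Formula) (T : Set (List Move)) : Prop where
  nonempty : T.Nonempty
  dialogues : ∀ d ∈ T, SDialogueFor S φ d
  prefix_closed : ∀ d ∈ T, ∀ e : List Move, e <+: d → 0 < e.length → e ∈ T
  leaf_wins : ∀ d ∈ T, (∀ m : Move, d ++ [m] ∉ T) → WinsFor S φ d
  no_infinite_branch : ∀ f : ℕ → Move, ∃ n : ℕ, 0 < n ∧ (List.ofFn fun i : Fin n => f i) ∉ T
  odd_unique_child : ∀ d ∈ T, 0 < d.length → d.length % 2 = 0 → ∃! m : Move, d ++ [m] ∈ T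
  even_all_children : ∀ d ∈ T, d.length % 2 = 1 →
    ∀ m : Move, SDialogueFor S φ (d ++ [m]) → d ++ [m] ∈ T

/-- `φ` is `S`-valid iff P has an `S`-winning strategy for `φ`. -/
def SValid (S : List Move → Prop) (φ : Formula) : Prop :=
  ∃ T : Set (List Move), IsWinningStrategy S φ T

/-- `φ` is N-valid (`⊨_N φ`) iff P has an N-winning strategy for `φ`. -/
def NValid (φ : Formula) : Prop := SValid NRules φ

theorem RuleE_of_prefix {e d : List Move} (h : e <+: d) (hd : RuleE d) : RuleE e := by
  obtain ⟨t, rfl⟩ := h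
  intro i hi hodd
  obtain ⟨z, hz⟩ := hd i (by simp; omega) hodd
  refine ⟨z, ?_⟩
  have : (e ++ t)[i]! = e[i]! := by
    simp [List.getElem!_eq_getElem?_getD, List.getElem?_append_left hi]
  rw [← this]; exact hz

/-- Rule E does not restrict P-moves. -/
theorem RuleE_append_P {d : List Move} {m : Move} (hd : RuleE d) (hl : d.length % 2 = 0) :
    RuleE (d ++ [m]) := by
  intro i hi hodd
  have hi' : i < d.length := by simp at hi; omega
  obtain ⟨z, hz⟩ := hd i hi' hodd
  refine ⟨z, ?_⟩
  have : (d ++ [m])[i]! = d[i]! := by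
    simp [List.getElem!_eq_getElem?_getD, List.getElem?_append_left hi']
  rw [this]; exact hz

theorem SDialogueFor_CL_iff (φ : Formula) (d : List Move) :
    SDialogueFor CLRules φ d ↔ SDialogueFor NRules φ d ∧ RuleE d := by
  unfold SDialogueFor CLRules NRules; tauto

/-- Every N-valid formula is CL-valid: if P has a winning strategy
in the dialogue game with rules D10 and D13, then P has a winning strategy in the
dialogue game with rules D10, D13 and E. -/
theorem N_valid_implies_CL_valid (φ : Formula) (h : SValid NRules φ) :
    SValid CLRules φ := by
  obtain ⟨T, hT⟩ := h
  have pos : ∀ d ∈ T, 0 < d.length := fun d hd => (hT.dialogues d hd).2.2.1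
  have hall : ∀ d ∈ T, RuleE d → d.length % 2 = 1 →
      ∀ m : Move, SDialogueFor CLRules φ (d ++ [m]) → d ++ [m] ∈ {d | d ∈ T ∧ RuleE d} := by
    intro d hd _ hl m hm
    rw [SDialogueFor_CL_iff] at hm
    exact ⟨hT.even_all_children d hd hl m hm.1, hm.2⟩
  refine ⟨{d | d ∈ T ∧ RuleE d}, ?_, ?_, ?_, ?_, ?_, ?_, ?_⟩
  · obtain ⟨d, hd⟩ := hT.nonempty
    have hp := pos d hd
    have hlen : (d.take 1).length = 1 := by simp; omega
    refine ⟨d.take 1, hT.prefix_closed d hd _ (List.take_prefix 1 d) (by omega), ?_⟩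
    intro i hi hodd
    omega
  · rintro d ⟨hd, hE⟩
    exact (SDialogueFor_CL_iff φ d).2 ⟨hT.dialogues d hd, hE⟩
  · rintro d ⟨hd, hE⟩ e he hl
    exact ⟨hT.prefix_closed d hd e he hl, RuleE_of_prefix he hE⟩
  · rintro d ⟨hd, hE⟩ hleaf
    have hodd : d.length % 2 = 1 := by
      by_contra hne
      have h0 : d.length % 2 = 0 := by omega
      obtain ⟨m, hm, _⟩ := hT.odd_unique_child d hd (pos d hd) h0
      exact hleaf m ⟨hm, RuleE_append_P hE h0⟩
    exact ⟨(SDialogueFor_CL_iff φ d).2 ⟨hT.dialogues d hd, hE⟩, hodd,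
      fun m hm => hleaf m (hall d hd hE hodd m hm)⟩
  · intro f
    obtain ⟨n, hn, hf⟩ := hT.no_infinite_branch f
    exact ⟨n, hn, fun h => hf h.1⟩
  · rintro d ⟨hd, hE⟩ hp h0
    obtain ⟨m, hm, hu⟩ := hT.odd_unique_child d hd hp h0
    exact ⟨m, ⟨hm, RuleE_append_P hE h0⟩, fun y hy => hu y hy.1⟩
  · rintro d ⟨hd, hE⟩ hl m hm
    exact hall d hd hE hl m hm
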